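/- Let D ⊆ ℂ be a symmetric open set which is basic with closed-disc closure, i.e. either (slice case) D is nonempty, connected, simply connected, D ∩ ℝ ≠ ∅ and the closure of D is homeomorphic to the closed unit disc, or (product case) D = U ∪ conj(U) where U ⊆ ℂ⁺ is nonempty, open, connected, simply connected and the closure of U is homeomorphic to the closed unit disc. Let ℍ be the real quaternions with standard basis (e₀,e₁,e₂,e₃) = (1,i,j,k) and 𝕊 = { J ∈ ℍ : J² = −1 }. Consider the set S of quadruples (f₀,f₁,f₂,f₃) of holomorphic Schwarz symmetric functions f_m : D → ℂ such that for every z ∈ D and every J ∈ 𝕊 the quaternion ∑_{m=0}^{3} (Re f_m(z) + (Im f_m(z))·J)·e_m is nonzero. Then S, equipped with the topology of componentwise uniform convergence on compact subsets of D, is path-connected. -/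

import Mathlib

open Set Metric

/-- The value at the imaginary unit `J` of the complex number `w`, viewed slicewise:
`w = x + iy ↦ x + y·J ∈ ℍ`. -/
noncomputable def sliceValue (J : Quaternion ℝ) (w : ℂ) : Quaternion ℝ :=
  ((w.re : ℝ) : Quaternion ℝ) + w.im • J

/-- The standard basis `(1, i, j, k)` of the quaternions. -/
noncomputable def quatBasis : Fin 4 → Quaternion ℝ :=
  ![1, ⟨0, 1, 0, 0⟩, ⟨0, 0, 1, 0⟩, ⟨0, 0, 0, 1⟩]

/-!
Let `a` and `b` be the quaternions whose coordinates are the real and the imaginary parts of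
`f₀ z, …, f₃ z`. The value of the slice function at the unit `J` is `a + J b`. It vanishes for
some imaginary unit `J` iff `|a| = |b|` and `a ⊥ b`, that is, iff `∑ (fₘ z)² = 0`. So the
quadruples in question are the Schwarz symmetric holomorphic maps from `D` to
`{v ∈ ℂ⁴ | ∑ vₘ² ≠ 0}`.

A Riemann map `φ` of `D` with `φ x = 0` at a real point `x` satisfies `conj ∘ φ ∘ conj = c φ`
with `c` a constant, by the Schwarz lemma. Hence the contraction `φ⁻¹ ∘ (t φ)` of `D` to `x`
commutes with conjugation, and precomposing with it joins every quadruple to a real constant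
inside the set. The real constants form the connected set `ℝ⁴ ∖ 0`. For `D = U ∪ conj U` the same
argument, with the contraction of `U` extended by symmetry, ends at a function taking a constant
value `v` on `U` and `conj v` on `conj U`, where `v` ranges over the complement of a complex
hypersurface in `ℂ⁴`; this is path-connected.

The Riemann map is a univalent `f : U → ball 0 1` with `f z₀ = 0` whose derivative at `z₀` has
maximal modulus, obtained by Montel and Hurwitz; if it omitted a value, the square-root trick would
increase that modulus.
-/

section

open Filter Topology Function
open scoped ComplexConjugate unitInterval

section NormalFamilies

theorem tendstoLocallyUniformlyOn_of_equicontinuousAt {ι X α : Type*} [TopologicalSpace X]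
    [LocallyCompactSpace X] [UniformSpace α] {p : Filter ι} {U : Set X} (hU : IsOpen U)
    {F : ι → X → α} {f : X → α} (hF : ∀ x ∈ U, EquicontinuousAt F x)
    (hlim : ∀ x ∈ U, Tendsto (F · x) p (𝓝 (f x))) : TendstoLocallyUniformlyOn F f p U := by
  rw [tendstoLocallyUniformlyOn_iff_forall_isCompact hU]
  intro K hKU hK
  have hKeq : EquicontinuousOn F K := fun x hx => (hF x (hKU hx)).equicontinuousWithinAt K
  have hKlim : Tendsto ((⋃₀ {K}).domRestrict ∘ F) p (𝓝 ((⋃₀ {K}).domRestrict f)) := by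
    rw [sUnion_singleton, tendsto_pi_nhds]
    exact fun x => hlim x (hKU x.2)
  exact UniformOnFun.tendsto_iff_tendstoUniformlyOn.1
    ((EquicontinuousOn.tendsto_uniformOnFun_iff_pi' (by simpa using hK) (by simpa using hKeq) p
      f).2 hKlim) K rfl

variable {ι E : Type*} [NormedAddCommGroup E] [NormedSpace ℂ E]

theorem equicontinuousAt_of_eventually_norm_le {F : ι → ℂ → E} {a : ℂ} {C : ℝ}
    (hd : ∀ᶠ z in 𝓝 a, ∀ i, DifferentiableAt ℂ (F i) z) (hb : ∀ᶠ z in 𝓝 a, ∀ i, ‖F i z‖ ≤ C) :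
    EquicontinuousAt F a := by
  obtain ⟨r, hr, hball⟩ := Metric.eventually_nhds_iff_ball.1 (hd.and hb)
  refine equicontinuousAt_of_continuity_modulus (fun z => (C + C) / r * dist z a) ?_ F ?_
  · have : Continuous fun z : ℂ => (C + C) / r * dist z a := by fun_prop
    simpa using this.tendsto a
  · filter_upwards [ball_mem_nhds a hr] with z hz i
    rw [dist_comm]
    refine Complex.dist_le_div_mul_dist_of_mapsTo_ball
      (fun w hw => ((hball w hw).1 i).differentiableWithinAt) (fun w hw => ?_) hz
    rw [mem_closedBall, dist_eq_norm]
    exact norm_sub_le_of_le ((hball w hw).2 i) ((hball a (mem_ball_self hr)).2 i)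

/- **Montel's theorem**, with an ultrafilter in place of a subsequence. -/
theorem exists_tendstoLocallyUniformlyOn_ultrafilter [ProperSpace E] (p : Ultrafilter ι)
    {U : Set ℂ} (hU : IsOpen U) {F : ι → ℂ → E} (hF : ∀ i, DifferentiableOn ℂ (F i) U)
    (hb : ∀ a ∈ U, ∃ C, ∀ᶠ z in 𝓝 a, ∀ i, ‖F i z‖ ≤ C) :
    ∃ f, TendstoLocallyUniformlyOn F f p U := by
  have hlim (a : ℂ) : ∃ v, a ∈ U → Tendsto (F · a) p (𝓝 v) := by
    by_cases ha : a ∈ U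
    · obtain ⟨C, hC⟩ := hb a ha
      obtain ⟨v, -, hv⟩ := (isCompact_closedBall (0 : E) C).ultrafilter_le_nhds (p.map (F · a))
        (tendsto_principal.2 (.of_forall fun i => mem_closedBall_zero_iff.2 (hC.self_of_nhds i)))
      exact ⟨v, fun _ => hv⟩
    · exact ⟨0, fun h => absurd h ha⟩
  choose f hf using hlim
  refine ⟨f, tendstoLocallyUniformlyOn_of_equicontinuousAt hU (fun a ha => ?_) hf⟩
  obtain ⟨C, hC⟩ := hb a ha
  refine equicontinuousAt_of_eventually_norm_le ?_ hC
  filter_upwards [hU.eventually_mem ha] with z hz i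
  exact (hF i).differentiableAt (hU.mem_nhds hz)

end NormalFamilies

section Hurwitz

variable {ι : Type*} {p : Filter ι} {U V : Set ℂ} {F : ι → ℂ → ℂ} {f : ℂ → ℂ} {a : ℂ}

theorem mem_image_closure_of_forall_frontier_le {E : Type*} [NormedAddCommGroup E]
    [NormedSpace ℂ E] [Nontrivial E] {s : Set E} (hs : Bornology.IsBounded s) {g : E → ℂ}
    (hg : DiffContOnCl ℂ g s) {x : E} (hx : x ∈ closure s) {v : ℂ} {c : ℝ}
    (hlt : ‖g x - v‖ < c) (hc : ∀ z ∈ frontier s, c ≤ ‖g z - v‖) : v ∈ g '' closure s := by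
  by_contra hv
  have hne : ∀ z ∈ closure s, g z - v ≠ 0 := fun z hz h => hv ⟨z, hz, sub_eq_zero.1 h⟩
  have hinv : DiffContOnCl ℂ (fun z => g z - v)⁻¹ s := (hg.sub_const v).inv hne
  have hbound := Complex.norm_le_of_forall_mem_frontier_norm_le hs hinv (C := c⁻¹)
    (fun z hz => by
      rw [Pi.inv_apply, norm_inv]
      exact inv_anti₀ ((norm_nonneg _).trans_lt hlt) (hc z hz)) hx
  rw [Pi.inv_apply, norm_inv, inv_le_inv₀ (norm_pos_iff.2 (hne x hx))
    ((norm_nonneg _).trans_lt hlt)] at hbound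
  exact hlt.not_ge hbound

theorem exists_closedBall_subset_forall_sphere_le_norm_sub (hf : AnalyticAt ℂ f a)
    (hnc : ¬ ∀ᶠ z in 𝓝 a, f z = f a) (hU : U ∈ 𝓝 a) (hfU : ContinuousOn f U) :
    ∃ r > 0, closedBall a r ⊆ U ∧ ∃ ε > 0, ∀ z ∈ sphere a r, ε ≤ ‖f z - f a‖ := by
  have hne := eventually_nhdsWithin_iff.1
    ((hf.eventually_eq_or_eventually_ne analyticAt_const).resolve_left hnc)
  obtain ⟨r, hr, hrU⟩ := nhds_basis_closedBall.mem_iff.1 (inter_mem hU hne)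
  have hcont : ContinuousOn (fun z => ‖f z - f a‖) (sphere a r) :=
    ((hfU.mono fun z hz => (hrU (sphere_subset_closedBall hz)).1).sub continuousOn_const).norm
  obtain ⟨w, hw, hmin⟩ := (isCompact_sphere a r).exists_isMinOn
    (NormedSpace.sphere_nonempty.2 hr.le) hcont
  have hwa : f w ≠ f a := (hrU (sphere_subset_closedBall hw)).2 (ne_of_mem_sphere hw hr.ne')
  exact ⟨r, hr, fun z hz => (hrU hz).1, ‖f w - f a‖, norm_pos_iff.2 (sub_ne_zero.2 hwa), hmin⟩

/- **Hurwitz's theorem**, by the maximum principle for `1 / (F i - f a)` on a small disc. -/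
theorem eventually_mem_image_of_tendstoLocallyUniformlyOn [p.NeBot] (hU : IsOpen U)
    (hF : ∀ᶠ i in p, DifferentiableOn ℂ (F i) U) (hlim : TendstoLocallyUniformlyOn F f p U)
    (ha : a ∈ U) (hV : V ∈ 𝓝 a) (hnc : ¬ ∀ᶠ z in 𝓝 a, f z = f a) :
    ∀ᶠ i in p, f a ∈ F i '' V := by
  have hf : DifferentiableOn ℂ f U := hlim.differentiableOn hF hU
  obtain ⟨r, hr, hrUV, ε, hε, hsphere⟩ := exists_closedBall_subset_forall_sphere_le_norm_sub
    (hf.analyticAt (hU.mem_nhds ha)) hnc (inter_mem (hU.mem_nhds ha) hV)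
    (hf.continuousOn.mono inter_subset_left)
  have hunif := (tendstoLocallyUniformlyOn_iff_forall_isCompact hU).1 hlim (closedBall a r)
    (hrUV.trans inter_subset_left) (isCompact_closedBall a r)
  filter_upwards [hF, Metric.tendstoUniformlyOn_iff.1 hunif (ε / 2) (by positivity)] with i hFi hi
  have hcl : DiffContOnCl ℂ (F i) (ball a r) :=
    hFi.diffContOnCl_ball (hrUV.trans inter_subset_left)
  have hcenter : ‖F i a - f a‖ < ε / 2 := by
    rw [← dist_eq_norm, dist_comm]
    exact hi a (mem_closedBall_self hr.le)
  have hfar : ∀ z ∈ frontier (ball a r), ε / 2 ≤ ‖F i z - f a‖ := fun z hz => by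
    rw [frontier_ball a hr.ne'] at hz
    have hclose := hi z (sphere_subset_closedBall hz)
    rw [dist_eq_norm] at hclose
    linarith [hsphere z hz, norm_sub_le_norm_sub_add_norm_sub (f z) (F i z) (f a)]
  have := mem_image_closure_of_forall_frontier_le isBounded_ball hcl
    (subset_closure (mem_ball_self hr)) hcenter hfar
  rw [closure_ball a hr.ne'] at this
  exact image_mono (hrUV.trans inter_subset_right) this

end Hurwitz

section Univalent

variable {ι : Type*} {U V : Set ℂ} {f g : ℂ → ℂ}

/-- Univalent functions: injective holomorphic functions on an open set `U`. That the derivative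
has no zero is a consequence of injectivity; it is a field so that it need not be derived. -/
structure IsUnivalentOn (f : ℂ → ℂ) (U : Set ℂ) : Prop where
  differentiableOn : DifferentiableOn ℂ f U
  injOn : InjOn f U
  deriv_ne_zero : ∀ z ∈ U, deriv f z ≠ 0

namespace IsUnivalentOn

theorem of_hasDerivAt {f' : ℂ → ℂ} (hf : ∀ z ∈ U, HasDerivAt f (f' z) z)
    (hf' : ∀ z ∈ U, f' z ≠ 0) (hinj : InjOn f U) : IsUnivalentOn f U where
  differentiableOn z hz := (hf z hz).differentiableAt.differentiableWithinAt
  injOn := hinj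
  deriv_ne_zero z hz := (hf z hz).deriv ▸ hf' z hz

theorem hasStrictDerivAt (hf : IsUnivalentOn f U) (hU : IsOpen U) {z : ℂ} (hz : z ∈ U) :
    HasStrictDerivAt f (deriv f z) z :=
  (hf.differentiableOn.analyticAt (hU.mem_nhds hz)).hasStrictDerivAt

theorem comp (hg : IsUnivalentOn g V) (hf : IsUnivalentOn f U) (hV : IsOpen V) (hU : IsOpen U)
    (hfUV : MapsTo f U V) : IsUnivalentOn (g ∘ f) U :=
  .of_hasDerivAt
    (fun _ hz => (hg.hasStrictDerivAt hV (hfUV hz)).hasDerivAt.comp _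
      (hf.hasStrictDerivAt hU hz).hasDerivAt)
    (fun z hz => mul_ne_zero (hg.deriv_ne_zero _ (hfUV hz)) (hf.deriv_ne_zero z hz))
    (hg.injOn.comp hf.injOn hfUV)

theorem isOpen_image (hf : IsUnivalentOn f U) (hU : IsOpen U) : IsOpen (f '' U) := by
  rw [isOpen_iff_mem_nhds]
  rintro _ ⟨z, hz, rfl⟩
  rw [← (hf.hasStrictDerivAt hU hz).map_nhds_eq (hf.deriv_ne_zero z hz)]
  exact image_mem_map (hU.mem_nhds hz)

theorem differentiableOn_of_leftInvOn (hf : IsUnivalentOn f U) (hU : IsOpen U)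
    (hg : LeftInvOn g f U) : DifferentiableOn ℂ g (f '' U) := by
  rintro _ ⟨z, hz, rfl⟩
  exact ((hf.hasStrictDerivAt hU hz).to_local_left_inverse (hf.deriv_ne_zero z hz)
    (hU.eventually_mem hz |>.mono hg)).hasDerivAt.differentiableAt.differentiableWithinAt

theorem exists_sq_eq (hf : IsUnivalentOn f U) (hU : IsOpen U) (hUs : IsSimplyConnected U)
    (h0 : 0 ∉ f '' U) : ∃ g, IsUnivalentOn g U ∧ ∀ z, g z ^ 2 = f z := by
  obtain ⟨g, hgc, hg⟩ :=
    Complex.exists_continuousOn_pow_eq hUs hU hf.differentiableOn.continuousOn h0 two_ne_zero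
  have hg0 : ∀ z ∈ U, (2 : ℂ) * g z ≠ 0 := fun z hz h =>
    h0 ⟨z, hz, by rw [← hg, (mul_eq_zero.1 h).resolve_left two_ne_zero, zero_pow two_ne_zero]⟩
  have hgd : ∀ z ∈ U, HasDerivAt g ((2 * g z)⁻¹ * deriv f z) z := fun z hz => by
    have hsq : HasStrictDerivAt (fun w : ℂ => w ^ 2) (2 * g z) (g z) := by
      simpa using hasStrictDerivAt_pow 2 (g z)
    have hloc : ∀ᶠ w in 𝓝 z, g w = hsq.localInverse _ _ _ (hg0 z hz) (f w) := by
      filter_upwards [(hgc.continuousAt (hU.mem_nhds hz)).eventually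
        (hsq.eventually_left_inverse (hg0 z hz))] with w hw
      rw [← hg w]
      exact hw.symm
    have hinv := hsq.to_localInverse (hg0 z hz)
    rw [hg z] at hinv
    exact (hinv.hasDerivAt.comp z (hf.hasStrictDerivAt hU hz).hasDerivAt).congr_of_eventuallyEq hloc
  refine ⟨g, .of_hasDerivAt hgd (fun z hz => ?_) fun a ha b hb hab => hf.injOn ha hb ?_, hg⟩
  · exact mul_ne_zero (inv_ne_zero (hg0 z hz)) (hf.deriv_ne_zero z hz)
  · rw [← hg, ← hg, hab]

end IsUnivalentOn

theorem injOn_of_tendstoLocallyUniformlyOn {p : Filter ι} [p.NeBot] {F : ι → ℂ → ℂ}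
    (hU : IsOpen U) (hF : ∀ᶠ i in p, DifferentiableOn ℂ (F i) U)
    (hinj : ∀ᶠ i in p, InjOn (F i) U) (hlim : TendstoLocallyUniformlyOn F f p U)
    (hnc : ∀ a ∈ U, ¬ ∀ᶠ z in 𝓝 a, f z = f a) : InjOn f U := by
  intro a ha b hb hab
  by_contra hne
  obtain ⟨V, W, hV, hW, haV, hbW, hVW⟩ := t2_separation hne
  have hva := eventually_mem_image_of_tendstoLocallyUniformlyOn hU hF hlim ha
    (inter_mem (hV.mem_nhds haV) (hU.mem_nhds ha)) (hnc a ha)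
  have hwb := eventually_mem_image_of_tendstoLocallyUniformlyOn hU hF hlim hb
    (inter_mem (hW.mem_nhds hbW) (hU.mem_nhds hb)) (hnc b hb)
  obtain ⟨i, hi, ⟨v, hv, hvi⟩, ⟨w, hw, hwi⟩⟩ := (hinj.and (hva.and hwb)).exists
  have hvw : v = w := hi hv.2 hw.2 (by rw [hvi, hwi, hab])
  exact disjoint_left.1 hVW hv.1 (hvw ▸ hw.1)

theorem IsUnivalentOn.of_tendstoLocallyUniformlyOn {p : Filter ι} [p.NeBot] {F : ι → ℂ → ℂ}
    (hU : IsOpen U) (hUc : IsPreconnected U) (hF : ∀ᶠ i in p, IsUnivalentOn (F i) U)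
    (hlim : TendstoLocallyUniformlyOn F f p U) {z₀ : ℂ} (hz₀ : z₀ ∈ U) (hd : deriv f z₀ ≠ 0) :
    IsUnivalentOn f U := by
  have hFd := hF.mono fun i hi => hi.differentiableOn
  have hfd : DifferentiableOn ℂ f U := hlim.differentiableOn hFd hU
  have hfa : AnalyticOnNhd ℂ f U := hfd.analyticOnNhd hU
  refine ⟨hfd, injOn_of_tendstoLocallyUniformlyOn hU hFd (hF.mono fun i hi => hi.injOn) hlim
    fun a ha hconst => hd ?_, fun a ha h0 => ?_⟩
  · have heq := hfa.eqOn_of_preconnected_of_eventuallyEq (analyticOnNhd_const (v := f a)) hUc ha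
      hconst
    rw [(heq.eventuallyEq_of_mem (hU.mem_nhds hz₀)).deriv_eq, deriv_const]
  · have hnc : ¬ ∀ᶠ z in 𝓝 a, deriv f z = deriv f a := fun hconst =>
      hd ((hfa.deriv.eqOn_of_preconnected_of_eventuallyEq
        (analyticOnNhd_const (v := deriv f a)) hUc ha hconst hz₀).trans h0)
    obtain ⟨i, hi, z, hz, hzi⟩ := (hF.and (eventually_mem_image_of_tendstoLocallyUniformlyOn hU
      (hFd.mono fun i hi => hi.deriv hU) (hlim.deriv hFd hU) ha (hU.mem_nhds ha) hnc)).exists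
    exact hi.deriv_ne_zero z hz (hzi.trans h0)

end Univalent

section Disc

variable {f g : ℂ → ℂ} {w z : ℂ}

/-- The Blaschke factor: the automorphism of the unit disc vanishing at `w`. -/
noncomputable def blaschke (w z : ℂ) : ℂ := (z - w) / (1 - conj w * z)

@[simp] theorem blaschke_self (w : ℂ) : blaschke w w = 0 := by simp [blaschke]

theorem one_sub_conj_mul_ne_zero (hw : w ∈ ball 0 1) (hz : z ∈ ball 0 1) :
    1 - conj w * z ≠ 0 := by
  rw [mem_ball_zero_iff] at hw hz
  intro h
  have hone : ‖w‖ * ‖z‖ = 1 := by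
    rw [← RCLike.norm_conj w, ← norm_mul, ← sub_eq_zero.1 h, norm_one]
  exact (mul_lt_one_of_nonneg_of_lt_one_left (norm_nonneg w) hw hz.le).ne hone

theorem blaschke_eq_zero_iff (hw : w ∈ ball 0 1) (hz : z ∈ ball 0 1) :
    blaschke w z = 0 ↔ z = w := by
  rw [blaschke, div_eq_zero_iff, or_iff_left (one_sub_conj_mul_ne_zero hw hz), sub_eq_zero]

theorem hasDerivAt_blaschke (hz : 1 - conj w * z ≠ 0) :
    HasDerivAt (blaschke w) ((1 - conj w * w) / (1 - conj w * z) ^ 2) z := by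
  have hnum : HasDerivAt (fun z : ℂ => z - w) 1 z := (hasDerivAt_id z).sub_const w
  have hden : HasDerivAt (fun z : ℂ => 1 - conj w * z) (-conj w) z := by
    simpa using ((hasDerivAt_id z).const_mul (conj w)).const_sub 1
  refine (hnum.div hden hz).congr_deriv ?_
  ring

theorem norm_one_sub_conj_mul_self (hw : w ∈ ball 0 1) : ‖1 - conj w * w‖ = 1 - ‖w‖ ^ 2 := by
  rw [mem_ball_zero_iff] at hw
  rw [Complex.conj_mul', ← Complex.ofReal_one, ← Complex.ofReal_pow, ← Complex.ofReal_sub,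
    Complex.norm_real, Real.norm_of_nonneg]
  nlinarith [norm_nonneg w]

theorem one_sub_norm_blaschke_sq (hz : 1 - conj w * z ≠ 0) :
    1 - ‖blaschke w z‖ ^ 2 = (1 - ‖w‖ ^ 2) * (1 - ‖z‖ ^ 2) / ‖1 - conj w * z‖ ^ 2 := by
  rw [blaschke, norm_div, div_pow, eq_div_iff (pow_ne_zero 2 (norm_ne_zero_iff.2 hz)), sub_mul,
    one_mul, div_mul_cancel₀ _ (pow_ne_zero 2 (norm_ne_zero_iff.2 hz))]
  simp only [← Complex.normSq_eq_norm_sq, Complex.normSq_apply, Complex.sub_re, Complex.sub_im,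
    Complex.mul_re, Complex.mul_im, Complex.conj_re, Complex.conj_im, Complex.one_re,
    Complex.one_im]
  ring

theorem one_sub_norm_sq_pos (hz : z ∈ ball 0 1) : 0 < 1 - ‖z‖ ^ 2 := by
  rw [mem_ball_zero_iff] at hz
  nlinarith [norm_nonneg z]

theorem mapsTo_blaschke (hw : w ∈ ball 0 1) : MapsTo (blaschke w) (ball 0 1) (ball 0 1) := by
  intro z hz
  have hne := one_sub_conj_mul_ne_zero hw hz
  have hpos : 0 < 1 - ‖blaschke w z‖ ^ 2 := by
    rw [one_sub_norm_blaschke_sq hne]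
    exact div_pos (mul_pos (one_sub_norm_sq_pos hw) (one_sub_norm_sq_pos hz))
      (pow_pos (norm_pos_iff.2 hne) 2)
  rw [mem_ball_zero_iff]
  nlinarith [norm_nonneg (blaschke w z)]

theorem isUnivalentOn_blaschke (hw : w ∈ ball 0 1) : IsUnivalentOn (blaschke w) (ball 0 1) := by
  refine .of_hasDerivAt (fun z hz => hasDerivAt_blaschke (one_sub_conj_mul_ne_zero hw hz))
    (fun z hz => div_ne_zero (one_sub_conj_mul_ne_zero hw hw)
      (pow_ne_zero 2 (one_sub_conj_mul_ne_zero hw hz))) fun a ha b hb hab => ?_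
  rw [blaschke, blaschke, div_eq_div_iff (one_sub_conj_mul_ne_zero hw ha)
    (one_sub_conj_mul_ne_zero hw hb)] at hab
  have hmul : (a - b) * (1 - conj w * w) = 0 := by linear_combination hab
  exact sub_eq_zero.1 ((mul_eq_zero.1 hmul).resolve_right (one_sub_conj_mul_ne_zero hw hw))

/-- The derivative of a map into the unit disc, measured in the hyperbolic metric of the disc. It is
unchanged under composition with an automorphism of the disc. -/
noncomputable def hyperbolicDeriv (f : ℂ → ℂ) (z : ℂ) : ℝ := ‖deriv f z‖ / (1 - ‖f z‖ ^ 2)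

theorem hyperbolicDeriv_of_eq_zero (h : f z = 0) : hyperbolicDeriv f z = ‖deriv f z‖ := by
  simp [hyperbolicDeriv, h]

theorem norm_deriv_le_hyperbolicDeriv (hz : f z ∈ ball 0 1) :
    ‖deriv f z‖ ≤ hyperbolicDeriv f z :=
  le_div_self (norm_nonneg _) (one_sub_norm_sq_pos hz) (sub_le_self _ (sq_nonneg _))

theorem hyperbolicDeriv_blaschke_comp (hf : DifferentiableAt ℂ f z) (hw : w ∈ ball 0 1)
    (hz : f z ∈ ball 0 1) : hyperbolicDeriv (blaschke w ∘ f) z = hyperbolicDeriv f z := by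
  have hne := one_sub_conj_mul_ne_zero hw hz
  rw [hyperbolicDeriv, ((hasDerivAt_blaschke hne).comp z hf.hasDerivAt).deriv, comp_apply,
    one_sub_norm_blaschke_sq hne, norm_mul, norm_div, norm_pow, norm_one_sub_conj_mul_self hw,
    hyperbolicDeriv]
  have hw' := (one_sub_norm_sq_pos hw).ne'
  have hz' := (one_sub_norm_sq_pos hz).ne'
  have hne' := norm_ne_zero_iff.2 hne
  field_simp

theorem hyperbolicDeriv_sq_lt (hg : deriv g z ≠ 0) (hz : g z ∈ ball 0 1) :
    hyperbolicDeriv (fun z => g z ^ 2) z < hyperbolicDeriv g z := by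
  have hpos := one_sub_norm_sq_pos hz
  have hfactor : 1 - (‖g z‖ ^ 2) ^ 2 = (1 - ‖g z‖ ^ 2) * (1 + ‖g z‖ ^ 2) := by ring
  have hamgm : 2 * ‖g z‖ < 1 + ‖g z‖ ^ 2 := by
    nlinarith [sq_pos_of_pos (sub_pos.2 (mem_ball_zero_iff.1 hz))]
  rw [hyperbolicDeriv, hyperbolicDeriv,
    ((differentiableAt_of_deriv_ne_zero hg).hasDerivAt.fun_pow 2).deriv]
  norm_num only [norm_mul, norm_pow, Nat.cast_ofNat, Complex.norm_ofNat, pow_one]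
  rw [div_lt_div_iff₀ (by rw [hfactor]; positivity) hpos, hfactor]
  calc 2 * ‖g z‖ * ‖deriv g z‖ * (1 - ‖g z‖ ^ 2)
      = 2 * ‖g z‖ * (‖deriv g z‖ * (1 - ‖g z‖ ^ 2)) := by ring
    _ < (1 + ‖g z‖ ^ 2) * (‖deriv g z‖ * (1 - ‖g z‖ ^ 2)) :=
      mul_lt_mul_of_pos_right hamgm (mul_pos (norm_pos_iff.2 hg) hpos)
    _ = ‖deriv g z‖ * ((1 - ‖g z‖ ^ 2) * (1 + ‖g z‖ ^ 2)) := by ring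

end Disc

section RiemannMapping

variable {U : Set ℂ} {f : ℂ → ℂ} {w z₀ : ℂ}

/-- Univalent maps of `U` into the unit disc, the competitors of the extremal problem that
produces the Riemann map. -/
structure IsDiscEmbedding (f : ℂ → ℂ) (U : Set ℂ) : Prop extends IsUnivalentOn f U where
  mapsTo : MapsTo f U (ball 0 1)

theorem IsDiscEmbedding.blaschke_comp (hf : IsDiscEmbedding f U) (hU : IsOpen U)
    (hw : w ∈ ball 0 1) : IsDiscEmbedding (blaschke w ∘ f) U :=
  ⟨(isUnivalentOn_blaschke hw).comp hf.toIsUnivalentOn isOpen_ball hU hf.mapsTo,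
    (mapsTo_blaschke hw).comp hf.mapsTo⟩

theorem IsUnivalentOn.exists_isDiscEmbedding (hf : IsUnivalentOn f U) (hU : IsOpen U) {c : ℂ}
    {r : ℝ} (hr : 0 < r) (hfar : ∀ z ∈ U, r ≤ ‖f z - c‖) : ∃ g, IsDiscEmbedding g U := by
  have hr' : (r / 2 : ℂ) ≠ 0 := by simpa using hr.ne'
  have hne : ∀ z ∈ U, f z - c ≠ 0 := fun z hz => norm_pos_iff.1 (hr.trans_le (hfar z hz))
  refine ⟨fun z => r / 2 * (f z - c)⁻¹, .of_hasDerivAt (fun z hz =>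
    ((((hf.hasStrictDerivAt hU hz).hasDerivAt.sub_const c).fun_inv (hne z hz)).const_mul _))
    (fun z hz => mul_ne_zero hr' (div_ne_zero (neg_ne_zero.2 (hf.deriv_ne_zero z hz))
      (pow_ne_zero 2 (hne z hz)))) fun a ha b hb hab => ?_, fun z hz => ?_⟩
  · exact hf.injOn ha hb (sub_left_injective (inv_injective (mul_right_injective₀ hr' hab)))
  · have hpos := hr.trans_le (hfar z hz)
    rw [mem_ball_zero_iff, norm_mul, norm_inv, norm_div, Complex.norm_real, Complex.norm_ofNat,
      Real.norm_of_nonneg hr.le, ← div_eq_mul_inv, div_lt_one hpos]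
    linarith [hfar z hz]

/- A square root `g` of `z - a` omits `-v` whenever it takes the value `v`, hence omits a disc. -/
theorem exists_isDiscEmbedding (hU : IsOpen U) (hUs : IsSimplyConnected U) (hne : U ≠ univ) :
    ∃ f, IsDiscEmbedding f U := by
  obtain ⟨a, ha⟩ := (ne_univ_iff_exists_notMem U).1 hne
  have hsub : IsUnivalentOn (fun z => z - a) U :=
    .of_hasDerivAt (fun z _ => (hasDerivAt_id z).sub_const a) (fun _ _ => one_ne_zero)
      sub_left_injective.injOn
  have h0 : (0 : ℂ) ∉ (fun z => z - a) '' U := by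
    rintro ⟨z, hz, hza⟩
    exact ha (sub_eq_zero.1 hza ▸ hz)
  obtain ⟨g, hg, hsq⟩ := hsub.exists_sq_eq hU hUs h0
  obtain ⟨b, hb⟩ := hUs.nonempty
  obtain ⟨r, hr, hball⟩ := Metric.isOpen_iff.1 (hg.isOpen_image hU) (g b) (mem_image_of_mem g hb)
  refine hg.exists_isDiscEmbedding hU (c := -g b) hr fun z hz => ?_
  by_contra! hlt
  obtain ⟨y, hy, hyz⟩ : -g z ∈ g '' U := hball (by
    rwa [mem_ball, dist_eq_norm, ← norm_neg, neg_sub, sub_neg_eq_add, add_comm, ← sub_neg_eq_add])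
  have hyz' : y = z := hsub.injOn hy hz (by simp only [← hsq, hyz, neg_sq])
  rw [hyz', eq_neg_iff_add_eq_zero, ← two_mul, mul_eq_zero, or_iff_right two_ne_zero] at hyz
  exact h0 ⟨z, hz, (hsq z).symm.trans (by rw [hyz, zero_pow two_ne_zero])⟩

theorem bddAbove_norm_deriv_isDiscEmbedding (hU : IsOpen U) (hz₀ : z₀ ∈ U) :
    BddAbove ((fun f => ‖deriv f z₀‖) '' {f | IsDiscEmbedding f U}) := by
  obtain ⟨r, hr, hrU⟩ := Metric.isOpen_iff.1 hU z₀ hz₀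
  refine ⟨2 / r, forall_mem_image.2 fun f (hf : IsDiscEmbedding f U) => ?_⟩
  refine Complex.norm_deriv_le_div_of_mapsTo_ball (hf.differentiableOn.mono hrU)
    (fun z hz => ?_) hr
  rw [mem_closedBall]
  linarith [dist_triangle_right (f z) (f z₀) 0, mem_ball.1 (hf.mapsTo (hrU hz)),
    mem_ball.1 (hf.mapsTo hz₀)]

theorem exists_isDiscEmbedding_forall_norm_deriv_le (hU : IsOpen U) (hUs : IsSimplyConnected U)
    (hne : U ≠ univ) (hz₀ : z₀ ∈ U) :
    ∃ f, IsDiscEmbedding f U ∧ ∀ h, IsDiscEmbedding h U → ‖deriv h z₀‖ ≤ ‖deriv f z₀‖ := by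
  obtain ⟨e, he⟩ := exists_isDiscEmbedding hU hUs hne
  have hbdd := bddAbove_norm_deriv_isDiscEmbedding hU hz₀
  obtain ⟨u, -, hu, huF⟩ := exists_seq_tendsto_sSup (Nonempty.image _ ⟨e, he⟩) hbdd
  choose F hF hFu using huF
  have hFd n := (hF n).differentiableOn
  have hF1 : ∀ n, ∀ z ∈ U, ‖F n z‖ ≤ 1 := fun n z hz =>
    (mem_ball_zero_iff.1 ((hF n).mapsTo hz)).le
  obtain ⟨f, hlim⟩ := exists_tendstoLocallyUniformlyOn_ultrafilter (hyperfilter ℕ) hU hFd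
    fun a ha => ⟨1, (hU.eventually_mem ha).mono fun z hz n => hF1 n z hz⟩
  have hmax : ∀ h, IsDiscEmbedding h U → ‖deriv h z₀‖ ≤ ‖deriv f z₀‖ := by
    have hderiv := ((hlim.deriv (.of_forall hFd) hU).tendsto_at hz₀).norm
    rw [tendsto_nhds_unique hderiv
      ((hu.mono_left Nat.hyperfilter_le_atTop).congr fun n => (hFu n).symm)]
    exact fun h hh => le_csSup hbdd ⟨h, hh, rfl⟩
  have hf : IsUnivalentOn f U := .of_tendstoLocallyUniformlyOn hU
    hUs.isPathConnected.isConnected.isPreconnected (.of_forall fun n => (hF n).toIsUnivalentOn)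
    hlim hz₀ (norm_pos_iff.1 ((norm_pos_iff.2 (he.deriv_ne_zero z₀ hz₀)).trans_le (hmax e he)))
  have hclosed : f '' U ⊆ closedBall 0 1 := image_subset_iff.2 fun z hz =>
    isClosed_closedBall.mem_of_tendsto (hlim.tendsto_at hz)
      (.of_forall fun n => mem_closedBall_zero_iff.2 (hF1 n z hz))
  refine ⟨f, ⟨hf, mapsTo_iff_image_subset.2 ?_⟩, hmax⟩
  rw [← interior_closedBall 0 one_ne_zero]
  exact interior_maximal hclosed (hf.isOpen_image hU)

theorem exists_isDiscEmbedding_forall_hyperbolicDeriv_le (hU : IsOpen U)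
    (hUs : IsSimplyConnected U) (hne : U ≠ univ) (hz₀ : z₀ ∈ U) :
    ∃ f, IsDiscEmbedding f U ∧ f z₀ = 0 ∧
      ∀ h, IsDiscEmbedding h U → hyperbolicDeriv h z₀ ≤ hyperbolicDeriv f z₀ := by
  obtain ⟨f, hf, hmax⟩ := exists_isDiscEmbedding_forall_norm_deriv_le hU hUs hne hz₀
  have hnormalize : ∀ h, IsDiscEmbedding h U →
      hyperbolicDeriv (blaschke (h z₀) ∘ h) z₀ = hyperbolicDeriv h z₀ := fun h hh =>
    hyperbolicDeriv_blaschke_comp (hh.hasStrictDerivAt hU hz₀).hasDerivAt.differentiableAt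
      (hh.mapsTo hz₀) (hh.mapsTo hz₀)
  refine ⟨blaschke (f z₀) ∘ f, hf.blaschke_comp hU (hf.mapsTo hz₀), blaschke_self _,
    fun h hh => ?_⟩
  calc hyperbolicDeriv h z₀
      = ‖deriv (blaschke (h z₀) ∘ h) z₀‖ :=
        (hnormalize h hh).symm.trans (hyperbolicDeriv_of_eq_zero (blaschke_self _))
    _ ≤ ‖deriv f z₀‖ := hmax _ (hh.blaschke_comp hU (hh.mapsTo hz₀))
    _ ≤ hyperbolicDeriv f z₀ := norm_deriv_le_hyperbolicDeriv (hf.mapsTo hz₀)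
    _ = hyperbolicDeriv (blaschke (f z₀) ∘ f) z₀ := (hnormalize f hf).symm

/- Koebe's square-root trick: if `f` omits `w`, then `blaschke w ∘ f` has no zero, and its square
root is a competitor with larger hyperbolic derivative. -/
theorem IsDiscEmbedding.surjOn (hf : IsDiscEmbedding f U) (hU : IsOpen U)
    (hUs : IsSimplyConnected U) (hz₀ : z₀ ∈ U)
    (hmax : ∀ h, IsDiscEmbedding h U → hyperbolicDeriv h z₀ ≤ hyperbolicDeriv f z₀) :
    SurjOn f U (ball 0 1) := by
  intro w hw
  by_contra hwU
  have hb := hf.blaschke_comp hU hw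
  have hb0 : 0 ∉ (blaschke w ∘ f) '' U := by
    rintro ⟨z, hz, hz0⟩
    exact hwU ⟨z, hz, (blaschke_eq_zero_iff hw (hf.mapsTo hz)).1 hz0⟩
  obtain ⟨g, hg, hsq⟩ := hb.exists_sq_eq hU hUs hb0
  have hg1 : MapsTo g U (ball 0 1) := fun z hz => by
    have := hb.mapsTo hz
    rwa [← hsq, mem_ball_zero_iff, norm_pow,
      pow_lt_one_iff_of_nonneg (norm_nonneg _) two_ne_zero, ← mem_ball_zero_iff] at this
  refine (hmax g ⟨hg, hg1⟩).not_gt ?_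
  rw [← hyperbolicDeriv_blaschke_comp (hf.hasStrictDerivAt hU hz₀).hasDerivAt.differentiableAt hw
    (hf.mapsTo hz₀), ← funext hsq]
  exact hyperbolicDeriv_sq_lt (hg.deriv_ne_zero z₀ hz₀) (hg1 hz₀)

end RiemannMapping

section Biholomorphism

variable {U V W : Set ℂ} {φ ψ φ' ψ' : ℂ → ℂ} {z₀ : ℂ}

theorem differentiableOn_conj_conj {f : ℂ → ℂ} (hf : DifferentiableOn ℂ f U) (hU : IsOpen U) :
    DifferentiableOn ℂ (conj ∘ f ∘ conj) (conj ⁻¹' U) := fun z hz => by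
  have := (hf.differentiableAt (hU.mem_nhds hz)).conj_conj
  rw [Complex.conj_conj] at this
  exact this.differentiableWithinAt

/-- Biholomorphisms `φ : U → V` of open sets, with inverse `ψ : V → U`. Both maps are total
functions whose values outside `U` and `V` are irrelevant. -/
structure IsBiholomorphism (φ ψ : ℂ → ℂ) (U V : Set ℂ) : Prop where
  differentiableOn : DifferentiableOn ℂ φ U
  differentiableOn_symm : DifferentiableOn ℂ ψ V
  mapsTo : MapsTo φ U V
  mapsTo_symm : MapsTo ψ V U
  invOn : InvOn ψ φ U V

namespace IsBiholomorphism

theorem symm (h : IsBiholomorphism φ ψ U V) : IsBiholomorphism ψ φ V U :=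
  ⟨h.differentiableOn_symm, h.differentiableOn, h.mapsTo_symm, h.mapsTo, h.invOn.symm⟩

theorem trans (h : IsBiholomorphism φ ψ U V) (h' : IsBiholomorphism φ' ψ' V W) :
    IsBiholomorphism (φ' ∘ φ) (ψ ∘ ψ') U W where
  differentiableOn := h'.differentiableOn.comp h.differentiableOn h.mapsTo
  differentiableOn_symm := h.differentiableOn_symm.comp h'.differentiableOn_symm h'.mapsTo_symm
  mapsTo := h'.mapsTo.comp h.mapsTo
  mapsTo_symm := h.mapsTo_symm.comp h'.mapsTo_symm
  invOn := h.invOn.comp h'.invOn h.mapsTo h'.mapsTo_symm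

theorem conj_conj (h : IsBiholomorphism φ ψ U V) (hU : IsOpen U) (hV : IsOpen V) :
    IsBiholomorphism (conj ∘ φ ∘ conj) (conj ∘ ψ ∘ conj) (conj ⁻¹' U) (conj ⁻¹' V) where
  differentiableOn := differentiableOn_conj_conj h.differentiableOn hU
  differentiableOn_symm := differentiableOn_conj_conj h.differentiableOn_symm hV
  mapsTo z hz := by simpa using h.mapsTo hz
  mapsTo_symm z hz := by simpa using h.mapsTo_symm hz
  invOn := ⟨fun z hz => by simp [h.invOn.1 hz], fun z hz => by simp [h.invOn.2 hz]⟩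

theorem norm_apply_of_map_zero (h : IsBiholomorphism φ ψ (ball 0 1) (ball 0 1)) (h0 : φ 0 = 0)
    {z : ℂ} (hz : z ∈ ball 0 1) : ‖φ z‖ = ‖z‖ := by
  have h0' : ψ 0 = 0 := by simpa only [h0] using h.invOn.1 (mem_ball_self one_pos)
  refine le_antisymm ?_ ?_
  · exact Complex.norm_le_norm_of_mapsTo_ball h.differentiableOn
      (h.mapsTo.mono_right ball_subset_closedBall) h0 (mem_ball_zero_iff.1 hz)
  · have := Complex.norm_le_norm_of_mapsTo_ball h.differentiableOn_symm
      (h.mapsTo_symm.mono_right ball_subset_closedBall) h0' (mem_ball_zero_iff.1 (h.mapsTo hz))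
    rwa [h.invOn.1 hz] at this

theorem exists_eqOn_mul_of_map_zero (h : IsBiholomorphism φ ψ (ball 0 1) (ball 0 1))
    (h0 : φ 0 = 0) : ∃ c : ℂ, EqOn φ (· * c) (ball 0 1) := by
  have hhalf : (1 / 2 : ℂ) ∈ ball (0 : ℂ) 1 := by
    rw [mem_ball_zero_iff]
    norm_num
  have hslope : ‖dslope φ 0 (1 / 2)‖ = 1 / 1 := by
    rw [dslope_of_ne _ (by norm_num), slope_def_field, h0, sub_zero, sub_zero, norm_div,
      h.norm_apply_of_map_zero h0 hhalf, div_self (by norm_num), div_one]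
  obtain ⟨c, -, hc⟩ := Complex.affine_of_mapsTo_ball_of_exists_norm_dslope_eq_div'
    h.differentiableOn (by rw [h0]; exact h.mapsTo.mono_right ball_subset_closedBall)
    ⟨_, hhalf, hslope⟩
  exact ⟨c, fun z hz => by simpa [h0] using hc hz⟩

end IsBiholomorphism

theorem exists_isBiholomorphism_ball (hU : IsOpen U) (hUs : IsSimplyConnected U) (hne : U ≠ univ)
    (hz₀ : z₀ ∈ U) : ∃ φ ψ, IsBiholomorphism φ ψ U (ball 0 1) ∧ φ z₀ = 0 := by
  obtain ⟨f, hf, hf0, hmax⟩ := exists_isDiscEmbedding_forall_hyperbolicDeriv_le hU hUs hne hz₀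
  have hsurj := hf.surjOn hU hUs hz₀ hmax
  have hleft : LeftInvOn (invFunOn f U) f U := hf.injOn.leftInvOn_invFunOn
  exact ⟨f, invFunOn f U, ⟨hf.differentiableOn, (hf.differentiableOn_of_leftInvOn hU hleft).mono
    hsurj, hf.mapsTo, hsurj.mapsTo_invFunOn, hleft, hsurj.rightInvOn_invFunOn⟩, hf0⟩

end Biholomorphism

section Deformation

variable {U V : Set ℂ} {φ ψ : ℂ → ℂ} {Φ : I → ℂ → ℂ} {z₀ : ℂ}

/-- Schwarz symmetry of a function on a symmetric set `D`. -/
def IsSchwarzSymmetricOn (f : ℂ → ℂ) (D : Set ℂ) : Prop := ∀ z ∈ D, f (conj z) = conj (f z)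

/-- Deformations of `D` into itself through holomorphic maps, ending at the identity. -/
structure IsHolomorphicDeformation (Φ : I → ℂ → ℂ) (D : Set ℂ) : Prop where
  continuousOn : ContinuousOn ↿Φ (univ ×ˢ D)
  differentiableOn : ∀ t, DifferentiableOn ℂ (Φ t) D
  mapsTo : ∀ t, MapsTo (Φ t) D D
  map_one : ∀ z ∈ D, Φ 1 z = z

/-- Holomorphic contractions of `D` to the point `z₀`, parametrised so that the identity is at
time `1`. -/
structure IsHolomorphicContraction (Φ : I → ℂ → ℂ) (D : Set ℂ) (z₀ : ℂ) : Prop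
    extends IsHolomorphicDeformation Φ D where
  map_zero : ∀ z ∈ D, Φ 0 z = z₀

theorem isHolomorphicContraction_of_starConvex (hD : StarConvex ℝ z₀ D) :
    IsHolomorphicContraction (fun t z => z₀ + (t : ℝ) • (z - z₀)) D z₀ where
  continuousOn := by
    simp only [HasUncurry.uncurry, id]
    fun_prop
  differentiableOn t := by fun_prop
  mapsTo t z hz := hD.add_smul_sub_mem hz t.2.1 t.2.2
  map_one z _ := by simp
  map_zero z _ := by simp

theorem isHolomorphicContraction_ball :
    IsHolomorphicContraction (fun t w => (t : ℝ) • w) (ball 0 1) 0 := by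
  simpa using isHolomorphicContraction_of_starConvex
    ((convex_ball (0 : ℂ) 1).starConvex (mem_ball_self one_pos))

theorem IsHolomorphicContraction.transport {w₀ : ℂ}
    (hΦ : IsHolomorphicContraction Φ V w₀) (h : IsBiholomorphism φ ψ U V) (hz₀ : z₀ ∈ U)
    (h0 : φ z₀ = w₀) :
    IsHolomorphicContraction (fun t => ψ ∘ Φ t ∘ φ) U z₀ where
  continuousOn := h.differentiableOn_symm.continuousOn.comp
    (hΦ.continuousOn.comp (f := fun p : I × ℂ => (p.1, φ p.2))
      (continuousOn_fst.prodMk (h.differentiableOn.continuousOn.comp continuousOn_snd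
        fun _ hp => hp.2)) fun _ hp => ⟨mem_univ _, h.mapsTo hp.2⟩)
    fun p hp => hΦ.mapsTo p.1 (h.mapsTo hp.2)
  differentiableOn t := h.differentiableOn_symm.comp
    ((hΦ.differentiableOn t).comp h.differentiableOn h.mapsTo) ((hΦ.mapsTo t).comp h.mapsTo)
  mapsTo t := h.mapsTo_symm.comp ((hΦ.mapsTo t).comp h.mapsTo)
  map_one z hz := by simp [hΦ.map_one _ (h.mapsTo hz), h.invOn.1 hz]
  map_zero z hz := by simp [hΦ.map_zero _ (h.mapsTo hz), ← h0, h.invOn.1 hz₀]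

theorem exists_isHolomorphicContraction (hU : IsOpen U) (hUs : IsSimplyConnected U)
    (hz₀ : z₀ ∈ U) : ∃ Φ, IsHolomorphicContraction Φ U z₀ := by
  rcases eq_or_ne U univ with rfl | hne
  · exact ⟨_, isHolomorphicContraction_of_starConvex (starConvex_univ z₀)⟩
  · obtain ⟨φ, ψ, h, h0⟩ := exists_isBiholomorphism_ball hU hUs hne hz₀
    exact ⟨_, isHolomorphicContraction_ball.transport h hz₀ h0⟩

/- The conjugate `conj ∘ φ ∘ conj` of the Riemann map differs from `φ` by an automorphism of the
disc fixing the centre, hence by a rotation. -/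
theorem IsBiholomorphism.exists_conj_apply_conj_eq_mul (h : IsBiholomorphism φ ψ U (ball 0 1))
    (hU : IsOpen U) (hconj : conj ⁻¹' U = U) (hz₀ : z₀ ∈ U) (hreal : conj z₀ = z₀)
    (h0 : φ z₀ = 0) : ∃ c, ∀ z ∈ U, conj (φ (conj z)) = φ z * c := by
  have hball : conj ⁻¹' ball (0 : ℂ) 1 = ball 0 1 := by
    ext
    simp
  have hα : IsBiholomorphism _ _ (ball 0 1) (ball 0 1) :=
    h.symm.trans (by simpa only [hconj, hball] using h.conj_conj hU isOpen_ball)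
  have hψ0 : ψ 0 = z₀ := by rw [← h0, h.invOn.1 hz₀]
  obtain ⟨c, hc⟩ := hα.exists_eqOn_mul_of_map_zero (by simp [hψ0, hreal, h0])
  exact ⟨c, fun z hz => by simpa [h.invOn.1 hz] using hc (h.mapsTo hz)⟩

theorem IsBiholomorphism.isSchwarzSymmetricOn_radial (h : IsBiholomorphism φ ψ U (ball 0 1))
    (hU : IsOpen U) (hconj : conj ⁻¹' U = U) (hz₀ : z₀ ∈ U) (hreal : conj z₀ = z₀)
    (h0 : φ z₀ = 0) (t : I) : IsSchwarzSymmetricOn (ψ ∘ (fun w => (t : ℝ) • w) ∘ φ) U := by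
  obtain ⟨c, hc⟩ := h.exists_conj_apply_conj_eq_mul hU hconj hz₀ hreal h0
  intro z hz
  have hball : (t : ℝ) • φ z ∈ ball (0 : ℂ) 1 := by
    simpa using isHolomorphicContraction_ball.mapsTo t (h.mapsTo hz)
  have hy := h.mapsTo_symm hball
  set y := ψ ((t : ℝ) • φ z)
  have hφy : φ y = (t : ℝ) • φ z := h.invOn.2 hball
  have hφconj : φ (conj y) = (t : ℝ) • φ (conj z) := by
    apply (starRingEnd ℂ).injective
    rw [hc y hy, hφy, smul_mul_assoc, ← hc z hz, Complex.real_smul, Complex.real_smul, map_mul,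
      Complex.conj_ofReal]
  change ψ ((t : ℝ) • φ (conj z)) = conj y
  rw [← hφconj, h.invOn.1 (hconj.ge hy)]

theorem exists_isHolomorphicContraction_isSchwarzSymmetricOn (hU : IsOpen U)
    (hUs : IsSimplyConnected U) (hconj : conj ⁻¹' U = U) (hz₀ : z₀ ∈ U) (hreal : conj z₀ = z₀) :
    ∃ Φ, IsHolomorphicContraction Φ U z₀ ∧ ∀ t, IsSchwarzSymmetricOn (Φ t) U := by
  rcases eq_or_ne U univ with rfl | hne
  · refine ⟨_, isHolomorphicContraction_of_starConvex (starConvex_univ z₀), fun t z _ => ?_⟩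
    simp [hreal]
  · obtain ⟨φ, ψ, h, h0⟩ := exists_isBiholomorphism_ball hU hUs hne hz₀
    exact ⟨_, isHolomorphicContraction_ball.transport h hz₀ h0,
      h.isSchwarzSymmetricOn_radial hU hconj hz₀ hreal h0⟩

end Deformation

section SchwarzExtension

variable {U : Set ℂ} {f g : ℂ → ℂ}

/-- The Schwarz symmetric extension of a function on the upper half-plane. The other branch also
covers the real axis, where its values are irrelevant. -/
noncomputable def schwarzExtend (f : ℂ → ℂ) (z : ℂ) : ℂ :=
  if 0 < z.im then f z else conj (f (conj z))

theorem IsSchwarzSymmetricOn.mono {D : Set ℂ} (hf : IsSchwarzSymmetricOn f D) (h : U ⊆ D) :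
    IsSchwarzSymmetricOn f U := fun z hz => hf z (h hz)

theorem IsSchwarzSymmetricOn.eqOn_union_conj (hf : IsSchwarzSymmetricOn f U)
    (hg : IsSchwarzSymmetricOn g U) (h : EqOn f g U) : EqOn f g (U ∪ conj ⁻¹' U) := by
  rintro z (hz | hz)
  · exact h hz
  · rw [← Complex.conj_conj z, hf _ hz, hg _ hz, h hz]

theorem eqOn_schwarzExtend (hpos : ∀ z ∈ U, 0 < z.im) : EqOn (schwarzExtend f) f U :=
  fun z hz => if_pos (hpos z hz)

theorem eqOn_schwarzExtend_conj (hpos : ∀ z ∈ U, 0 < z.im) :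
    EqOn (schwarzExtend f) (conj ∘ f ∘ conj) (conj ⁻¹' U) := fun z hz => by
  have := hpos _ hz
  rw [Complex.conj_im] at this
  exact if_neg (by linarith)

theorem isSchwarzSymmetricOn_schwarzExtend (hpos : ∀ z ∈ U, 0 < z.im) :
    IsSchwarzSymmetricOn (schwarzExtend f) (U ∪ conj ⁻¹' U) := by
  rintro z (hz | hz)
  · have hz' : conj z ∈ conj ⁻¹' U := by simpa using hz
    simp [eqOn_schwarzExtend hpos hz, eqOn_schwarzExtend_conj hpos hz']
  · rw [eqOn_schwarzExtend hpos hz, eqOn_schwarzExtend_conj hpos hz]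
    simp

theorem mapsTo_schwarzExtend (hpos : ∀ z ∈ U, 0 < z.im) (hf : MapsTo f U U) :
    MapsTo (schwarzExtend f) (U ∪ conj ⁻¹' U) (U ∪ conj ⁻¹' U) := by
  refine MapsTo.union_union (hf.congr (eqOn_schwarzExtend hpos).symm) ?_
  exact MapsTo.congr (fun z hz => by simpa using hf hz) (eqOn_schwarzExtend_conj hpos).symm

theorem differentiableOn_schwarzExtend (hU : IsOpen U) (hpos : ∀ z ∈ U, 0 < z.im)
    (hf : DifferentiableOn ℂ f U) : DifferentiableOn ℂ (schwarzExtend f) (U ∪ conj ⁻¹' U) :=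
  (hf.congr (eqOn_schwarzExtend hpos)).union_of_isOpen
    ((differentiableOn_conj_conj hf hU).congr (eqOn_schwarzExtend_conj hpos)) hU
    (hU.preimage Complex.continuous_conj)

theorem continuousOn_schwarzExtend {X : Type*} [TopologicalSpace X] {F : X → ℂ → ℂ}
    (hU : IsOpen U) (hpos : ∀ z ∈ U, 0 < z.im) (hF : ContinuousOn ↿F (univ ×ˢ U)) :
    ContinuousOn ↿(fun x => schwarzExtend (F x)) (univ ×ˢ (U ∪ conj ⁻¹' U)) := by
  have hV : IsOpen (conj ⁻¹' U) := hU.preimage Complex.continuous_conj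
  have hFconj : ContinuousOn ↿(fun x => conj ∘ F x ∘ conj) (univ ×ˢ (conj ⁻¹' U)) :=
    Complex.continuous_conj.comp_continuousOn
      (hF.comp (f := fun p : X × ℂ => (p.1, conj p.2)) (by fun_prop)
        fun p hp => ⟨mem_univ _, hp.2⟩)
  rw [prod_union]
  exact (hF.congr fun p hp => eqOn_schwarzExtend hpos hp.2).union_of_isOpen
    (hFconj.congr fun p hp => eqOn_schwarzExtend_conj hpos hp.2)
    (isOpen_univ.prod hU) (isOpen_univ.prod hV)

theorem IsHolomorphicDeformation.schwarzExtend {Φ : I → ℂ → ℂ}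
    (hΦ : IsHolomorphicDeformation Φ U) (hU : IsOpen U) (hpos : ∀ z ∈ U, 0 < z.im) :
    IsHolomorphicDeformation (fun t => schwarzExtend (Φ t)) (U ∪ conj ⁻¹' U) where
  continuousOn := continuousOn_schwarzExtend hU hpos hΦ.continuousOn
  differentiableOn t := differentiableOn_schwarzExtend hU hpos (hΦ.differentiableOn t)
  mapsTo t := mapsTo_schwarzExtend hpos (hΦ.mapsTo t)
  map_one := by
    have hsymm := isSchwarzSymmetricOn_schwarzExtend (f := Φ 1) hpos
    exact (hsymm.mono subset_union_left).eqOn_union_conj (g := id) (fun _ _ => rfl)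
      fun z hz => (eqOn_schwarzExtend hpos hz).trans (hΦ.map_one z hz)

end SchwarzExtension

section SchwarzMaps

variable {ι : Type*} {D U : Set ℂ} {S : Set (ι → ℂ)} {Φ : I → ℂ → ℂ} {F G : ι → C(D, ℂ)} {z₀ : ℂ}

/-- Tuples of holomorphic Schwarz symmetric functions on `D` taking values in `S`, with the
topology of locally uniform convergence inherited from `ι → C(D, ℂ)`. -/
def schwarzMaps (D : Set ℂ) (S : Set (ι → ℂ)) : Set (ι → C(D, ℂ)) :=
  {F | (∀ m, ∃ f : ℂ → ℂ, DifferentiableOn ℂ f D ∧ IsSchwarzSymmetricOn f D ∧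
      ∀ z : D, F m z = f z) ∧ ∀ z : D, (F · z) ∈ S}

theorem apply_conj_of_mem_schwarzMaps (hF : F ∈ schwarzMaps D S) (hz₀ : z₀ ∈ D)
    (hz₀' : conj z₀ ∈ D) (m : ι) : F m ⟨conj z₀, hz₀'⟩ = conj (F m ⟨z₀, hz₀⟩) := by
  obtain ⟨f, -, hsymm, hf⟩ := hF.1 m
  rw [hf, hf, hsymm z₀ hz₀]

theorem IsHolomorphicDeformation.joinedIn (hΦ : IsHolomorphicDeformation Φ D)
    (hsymm : ∀ t, IsSchwarzSymmetricOn (Φ t) D) (hF : F ∈ schwarzMaps D S)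
    (hG : ∀ m, ∀ z : D, G m z = F m ⟨Φ 0 z, hΦ.mapsTo 0 z.2⟩) :
    JoinedIn (schwarzMaps D S) G F := by
  have hcont : Continuous fun p : I × D => Φ p.1 p.2 :=
    hΦ.continuousOn.comp_continuous (f := fun p : I × D => (p.1, (p.2 : ℂ))) (by fun_prop)
      fun p => ⟨mem_univ _, p.2.2⟩
  let H : C(I × D, D) := ⟨fun p => ⟨Φ p.1 p.2, hΦ.mapsTo p.1 p.2.2⟩, hcont.subtype_mk _⟩
  refine ⟨⟨⟨fun t m => (F m).comp (H.curry t), ?_⟩, ?_, ?_⟩, fun t => ⟨fun m => ?_, fun z => ?_⟩⟩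
  · exact continuous_pi fun m =>
      (ContinuousMap.continuous_postcomp (F m)).comp H.curry.continuous
  · ext m z
    exact (hG m z).symm
  · ext m z
    exact congrArg (F m) (Subtype.ext (hΦ.map_one z z.2))
  · obtain ⟨f, hf, hfsymm, hFf⟩ := hF.1 m
    refine ⟨f ∘ Φ t, hf.comp (hΦ.differentiableOn t) (hΦ.mapsTo t), fun z hz => ?_, fun z => hFf _⟩
    rw [comp_apply, hsymm t z hz, hfsymm _ (hΦ.mapsTo t hz), comp_apply]
  · exact hF.2 _

theorem isPathConnected_of_forall_exists_joinedIn {X Y : Type*} [TopologicalSpace X]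
    [TopologicalSpace Y] {A : Set X} {B : Set Y} {c : X → Y} (hA : IsPathConnected A)
    (hc : ContinuousOn c A) (hcB : MapsTo c A B) (h : ∀ y ∈ B, ∃ x ∈ A, JoinedIn B (c x) y) :
    IsPathConnected B := by
  obtain ⟨a, ha⟩ := hA.nonempty
  refine ⟨c a, hcB ha, fun {y} hy => ?_⟩
  obtain ⟨x, hx, hxy⟩ := h y hy
  exact (((hA.joinedIn a ha x hx).map_continuousOn hc).mono hcB.image_subset).trans hxy

theorem isPathConnected_schwarzMaps (hD : IsOpen D) (hDs : IsSimplyConnected D)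
    (hconj : conj ⁻¹' D = D) (hz₀ : z₀ ∈ D) (hreal : conj z₀ = z₀)
    (hS : IsPathConnected {v : ι → ℝ | (fun m => (v m : ℂ)) ∈ S}) :
    IsPathConnected (schwarzMaps D S) := by
  obtain ⟨Φ, hΦ, hsymm⟩ :=
    exists_isHolomorphicContraction_isSchwarzSymmetricOn hD hDs hconj hz₀ hreal
  refine isPathConnected_of_forall_exists_joinedIn
    (c := fun v m => ContinuousMap.const D (v m : ℂ)) hS ?_ ?_ fun F hF => ?_
  · exact (continuous_pi fun m =>
      ContinuousMap.continuous_const'.comp (by fun_prop)).continuousOn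
  · exact fun v hv => ⟨fun m => ⟨fun _ => v m, by fun_prop, fun _ _ => by simp, fun _ => rfl⟩,
      fun _ => hv⟩
  · have hre : ∀ m, ((F m ⟨z₀, hz₀⟩).re : ℂ) = F m ⟨z₀, hz₀⟩ := fun m => by
      have := apply_conj_of_mem_schwarzMaps hF hz₀ (hreal.symm ▸ hz₀) m
      simp only [hreal] at this
      exact Complex.conj_eq_iff_re.1 this.symm
    refine ⟨fun m => (F m ⟨z₀, hz₀⟩).re, ?_, hΦ.joinedIn hsymm hF fun m z => ?_⟩
    · simpa only [mem_ofPred_eq, hre] using hF.2 ⟨z₀, hz₀⟩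
    · simp only [ContinuousMap.const_apply, hre, hΦ.map_zero z z.2]

theorem isPathConnected_schwarzMaps_union_conj (hU : IsOpen U) (hUs : IsSimplyConnected U)
    (hpos : ∀ z ∈ U, 0 < z.im) (hS : IsPathConnected S) (hSconj : MapsTo (conj ∘ ·) S S) :
    IsPathConnected (schwarzMaps (U ∪ conj ⁻¹' U) S) := by
  obtain ⟨z₀, hz₀⟩ := hUs.nonempty
  obtain ⟨Φ, hΦ⟩ := exists_isHolomorphicContraction hU hUs hz₀
  have hcont (m : ι) : Continuous fun p : (ι → ℂ) × ↥(U ∪ conj ⁻¹' U) =>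
      schwarzExtend (fun _ => p.1 m) p.2 :=
    (continuousOn_schwarzExtend (F := fun (v : ι → ℂ) _ => v m) hU hpos
      ((continuous_apply m).comp continuous_fst).continuousOn).comp_continuous
      (f := fun p : (ι → ℂ) × ↥(U ∪ conj ⁻¹' U) => (p.1, (p.2 : ℂ))) (by fun_prop)
      fun p => ⟨mem_univ _, p.2.2⟩
  refine isPathConnected_of_forall_exists_joinedIn
    (c := fun v m => ContinuousMap.curry ⟨_, hcont m⟩ v) hS
    (continuous_pi fun m => ContinuousMap.continuous _).continuousOn ?_ fun F hF => ?_
  · refine fun v hv => ⟨fun m => ⟨schwarzExtend fun _ => v m, differentiableOn_schwarzExtend hU hpos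
      (differentiableOn_const _), isSchwarzSymmetricOn_schwarzExtend hpos, fun _ => rfl⟩, ?_⟩
    rintro ⟨z, hz | hz⟩
    · simpa [eqOn_schwarzExtend hpos hz] using hv
    · simpa [eqOn_schwarzExtend_conj hpos hz, comp_def] using hSconj hv
  · refine ⟨_, hF.2 ⟨z₀, Or.inl hz₀⟩, (hΦ.schwarzExtend hU hpos).joinedIn
      (fun t => isSchwarzSymmetricOn_schwarzExtend hpos) hF ?_⟩
    rintro m ⟨z, hz | hz⟩
    · simp [eqOn_schwarzExtend hpos hz, hΦ.map_zero z hz]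
    · have hz₀' : conj z₀ ∈ U ∪ conj ⁻¹' U := Or.inr (by simpa using hz₀)
      simp [eqOn_schwarzExtend_conj hpos hz, hΦ.map_zero _ hz,
        apply_conj_of_mem_schwarzMaps hF (Or.inl hz₀) hz₀']

end SchwarzMaps

section QuadraticForm

variable {ι : Type*}

/- The complex line through two points meets the hypersurface `P = 0` in finitely many points,
whose complement in the line is path-connected. -/
theorem isPathConnected_setOf_eval_ne_zero {P : MvPolynomial ι ℂ} (hP : P ≠ 0) :
    IsPathConnected {v : ι → ℂ | MvPolynomial.eval v P ≠ 0} := by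
  obtain ⟨a, ha⟩ : ∃ a, MvPolynomial.eval a P ≠ 0 := by
    by_contra! h
    exact hP (MvPolynomial.funext fun v => by simp [h v])
  refine ⟨a, ha, fun {b} hb => ?_⟩
  let line : ℂ → ι → ℂ := fun s m => a m + s * (b m - a m)
  let Q : Polynomial ℂ :=
    MvPolynomial.aeval (fun m => .C (a m) + .X * .C (b m - a m)) P
  have hQ (s : ℂ) : Q.eval s = MvPolynomial.eval (line s) P := by
    have hC : (Polynomial.evalRingHom s).comp Polynomial.C = .id ℂ :=
      RingHom.ext fun _ => Polynomial.eval_C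
    simp [Q, line, MvPolynomial.polynomial_eval_eval₂, MvPolynomial.aeval_def, hC]
  have hline0 : line 0 = a := by simp [line]
  have hline1 : line 1 = b := by simp [line]
  have hQ0 : Q ≠ 0 := fun h => ha (by rw [← hline0, ← hQ, h, Polynomial.eval_zero])
  have hcompl : IsPathConnected {s | Q.IsRoot s}ᶜ :=
    (Polynomial.finite_setOfPred_isRoot hQ0).countable.isPathConnected_compl_of_one_lt_rank
      (by simp [Complex.rank_real_complex])
  have hjoin := hcompl.joinedIn 0 (by simpa [hQ, hline0] using ha) 1
    (by simpa [hQ, hline1] using hb)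
  have hcont : Continuous line := by fun_prop
  rw [← hline0, ← hline1]
  refine (hjoin.map_continuousOn hcont.continuousOn).mono ?_
  rintro _ ⟨s, hs, rfl⟩
  simpa [hQ] using hs

theorem isPathConnected_setOf_sum_sq_ne_zero [Fintype ι] [Nonempty ι] :
    IsPathConnected {v : ι → ℂ | ∑ m, v m ^ 2 ≠ 0} := by
  classical
  have hne : (∑ m : ι, MvPolynomial.X m ^ 2 : MvPolynomial ι ℂ) ≠ 0 := fun h => by
    have := congrArg (MvPolynomial.eval (Pi.single (Classical.arbitrary ι) 1)) h
    simp [Pi.single_apply] at this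
  simpa using isPathConnected_setOf_eval_ne_zero hne

theorem isPathConnected_setOf_ofReal_sum_sq_ne_zero [Fintype ι] [Nontrivial ι] :
    IsPathConnected {v : ι → ℝ | (fun m => (v m : ℂ)) ∈ {v : ι → ℂ | ∑ m, v m ^ 2 ≠ 0}} := by
  convert isPathConnected_compl_singleton_of_one_lt_rank
    (by simpa using Fintype.one_lt_card (α := ι)) (0 : ι → ℝ) using 1
  ext v
  have hcast : ∑ m, (v m : ℂ) ^ 2 = ((∑ m, v m ^ 2 : ℝ) : ℂ) := by push_cast; rfl
  simp only [mem_ofPred_eq, mem_compl_iff, mem_singleton_iff, hcast, Complex.ofReal_eq_zero, ne_eq]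
  rw [Finset.sum_eq_zero_iff_of_nonneg fun m _ => sq_nonneg (v m)]
  simp [funext_iff]

end QuadraticForm

section Quaternion

open Quaternion

section EquivTuple

variable {R : Type*} [Zero R] [One R] [Neg R] (r : Fin 4 → R)

theorem equivTuple_symm_re : ((equivTuple R).symm r).re = r 0 := rfl

theorem equivTuple_symm_imI : ((equivTuple R).symm r).imI = r 1 := rfl

theorem equivTuple_symm_imJ : ((equivTuple R).symm r).imJ = r 2 := rfl

theorem equivTuple_symm_imK : ((equivTuple R).symm r).imK = r 3 := rfl

end EquivTuple

theorem quatBasis_eq_equivTuple_symm_single (m : Fin 4) :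
    quatBasis m = (equivTuple ℝ).symm (Pi.single m 1) := by
  fin_cases m <;> rfl

theorem quaternion_sq_eq_neg_one_iff {J : ℍ[ℝ]} : J ^ 2 = -1 ↔ J.re = 0 ∧ normSq J = 1 := by
  constructor
  · intro h
    have hnorm : normSq J = 1 := by
      refine (pow_eq_one_iff_of_nonneg normSq_nonneg two_ne_zero).1 ?_
      rw [← map_pow, h, normSq_neg, map_one]
    have hre := congrArg QuaternionAlgebra.re h
    rw [normSq_def'] at hnorm
    simp only [sq, re_mul, re_neg, re_one] at hre
    exact ⟨by nlinarith [sq_nonneg J.re], by rw [normSq_def', hnorm]⟩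
  · rintro ⟨hre, hnorm⟩
    have h := self_mul_star J
    rw [star_eq_neg.2 hre, hnorm, mul_neg, ← sq, coe_one] at h
    exact neg_eq_iff_eq_neg.1 h

/- When `b ≠ 0` the only candidate is `J = -a b⁻¹`, a multiple of `a * star b`. -/
theorem exists_sq_eq_neg_one_and_add_mul_eq_zero_iff {a b : ℍ[ℝ]} :
    (∃ J : ℍ[ℝ], J ^ 2 = -1 ∧ a + J * b = 0) ↔ normSq a = normSq b ∧ (a * star b).re = 0 := by
  simp only [quaternion_sq_eq_neg_one_iff]
  constructor
  · rintro ⟨J, ⟨hre, hnorm⟩, h0⟩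
    obtain rfl : a = -(J * b) := eq_neg_of_add_eq_zero_left h0
    refine ⟨by simp [hnorm], ?_⟩
    rw [neg_mul, mul_assoc, self_mul_star, re_neg, mul_coe_eq_smul, re_smul, hre, smul_zero,
      neg_zero]
  · rintro ⟨hnorm, hre⟩
    rcases eq_or_ne b 0 with rfl | hb
    · have ha : a = 0 := by simpa using hnorm
      refine ⟨(equivTuple ℝ).symm ![0, 1, 0, 0], ⟨rfl, ?_⟩, by rw [ha, mul_zero, add_zero]⟩
      simp [-equivTuple_symm_apply, normSq_def', equivTuple_symm_re, equivTuple_symm_imI,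
        equivTuple_symm_imJ, equivTuple_symm_imK]
    · refine ⟨-(a * b⁻¹), ⟨?_, ?_⟩, by simp [hb]⟩
      · rw [inv_def, mul_smul_comm, re_neg, re_smul, hre, smul_zero, neg_zero]
      · rw [normSq_neg, map_mul, normSq_inv, hnorm, mul_inv_cancel₀ (normSq_ne_zero.2 hb)]

theorem sum_sliceValue_mul_quatBasis (J : ℍ[ℝ]) (v : Fin 4 → ℂ) :
    ∑ m, sliceValue J (v m) * quatBasis m =
      (equivTuple ℝ).symm (fun m => (v m).re) + J * (equivTuple ℝ).symm fun m => (v m).im := by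
  ext <;> simp [-equivTuple_symm_apply, Fin.sum_univ_four, sliceValue,
    quatBasis_eq_equivTuple_symm_single, equivTuple_symm_re, equivTuple_symm_imI,
    equivTuple_symm_imJ, equivTuple_symm_imK] <;> ring

theorem sum_sq_eq_zero_iff_normSq_eq_and_re_mul_star_eq_zero (v : Fin 4 → ℂ) :
    ∑ m, v m ^ 2 = 0 ↔
      normSq ((equivTuple ℝ).symm fun m => (v m).re) =
          normSq ((equivTuple ℝ).symm fun m => (v m).im) ∧
        ((equivTuple ℝ).symm (fun m => (v m).re) *
          star ((equivTuple ℝ).symm fun m => (v m).im)).re = 0 := by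
  rw [Complex.ext_iff, normSq_def', normSq_def']
  simp only [Fin.sum_univ_four, equivTuple_symm_re, equivTuple_symm_imI, equivTuple_symm_imJ,
    equivTuple_symm_imK, sq, Complex.add_re, Complex.add_im, Complex.mul_re, Complex.mul_im,
    Complex.zero_re, Complex.zero_im, re_mul, re_star, imI_star, imJ_star, imK_star]
  constructor <;> rintro ⟨h1, h2⟩ <;> constructor <;> linarith

theorem forall_sum_sliceValue_ne_zero_iff (v : Fin 4 → ℂ) :
    (∀ J : ℍ[ℝ], J ^ 2 = -1 → ∑ m, sliceValue J (v m) * quatBasis m ≠ 0) ↔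
      ∑ m, v m ^ 2 ≠ 0 := by
  rw [Ne, sum_sq_eq_zero_iff_normSq_eq_and_re_mul_star_eq_zero,
    ← exists_sq_eq_neg_one_and_add_mul_eq_zero_iff]
  simp only [sum_sliceValue_mul_quatBasis, ne_eq, not_exists, not_and]

end Quaternion

theorem slice_regular_nonvanishing_pathConnected_general {D : Set ℂ}
    (hD : (IsOpen D ∧ IsSimplyConnected D ∧ (∃ x ∈ D, x.im = 0) ∧ conj '' D = D) ∨
      ∃ U : Set ℂ, IsOpen U ∧ IsSimplyConnected U ∧ (∀ z ∈ U, 0 < z.im) ∧ D = U ∪ conj '' U) :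
    IsPathConnected
      {F : Fin 4 → C(D, ℂ) |
        (∀ m : Fin 4, ∃ f : ℂ → ℂ, DifferentiableOn ℂ f D ∧
          (∀ z ∈ D, f (conj z) = conj (f z)) ∧ ∀ z : D, F m z = f z) ∧
        ∀ z : D, ∀ J : Quaternion ℝ, J ^ 2 = -1 →
          (∑ m : Fin 4, sliceValue J (F m z) * quatBasis m) ≠ 0} := by
  have himage (V : Set ℂ) : conj '' V = conj ⁻¹' V :=
    congrFun (image_eq_preimage_of_inverse Complex.conj_conj Complex.conj_conj) V
  simp only [himage] at hD
  simp only [forall_sum_sliceValue_ne_zero_iff]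
  rcases hD with ⟨hDo, hDs, ⟨x, hx, hreal⟩, hconj⟩ | ⟨U, hU, hUs, hpos, rfl⟩
  · exact isPathConnected_schwarzMaps hDo hDs hconj hx (Complex.conj_eq_iff_im.2 hreal)
      isPathConnected_setOf_ofReal_sum_sq_ne_zero
  · refine isPathConnected_schwarzMaps_union_conj hU hUs hpos
      isPathConnected_setOf_sum_sq_ne_zero fun v hv => ?_
    have hsum : ∑ m, (conj ∘ v) m ^ 2 = conj (∑ m, v m ^ 2) := by simp
    rw [mem_ofPred_eq, hsum]
    exact (map_ne_zero _).2 hv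

end

/-- For a basic symmetric planar domain `D` with closed-disc closure (slice or
product type), the set of quadruples `(f₀,f₁,f₂,f₃)` of holomorphic Schwarz symmetric
functions on `D` such that the associated slice-regular quaternionic function
`f₀ + f₁ i + f₂ j + f₃ k` is nowhere zero, with the topology of componentwise uniform
convergence on compact subsets of `D`, is path-connected. -/
theorem slice_regular_nonvanishing_pathConnected (D : Set ℂ)
    (hbasic :
      (D.Nonempty ∧ IsOpen D ∧ IsConnected D ∧ SimplyConnectedSpace D ∧
        (∃ x ∈ D, x.im = 0) ∧ (starRingEnd ℂ) '' D = D ∧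
        Nonempty (closure D ≃ₜ closedBall (0 : ℂ) 1)) ∨
      (∃ U : Set ℂ, U.Nonempty ∧ IsOpen U ∧ IsConnected U ∧ SimplyConnectedSpace U ∧
        (∀ z ∈ U, 0 < z.im) ∧ Nonempty (closure U ≃ₜ closedBall (0 : ℂ) 1) ∧
        D = U ∪ (starRingEnd ℂ) '' U)) :
    IsPathConnected
      {F : Fin 4 → C(D, ℂ) |
        (∀ m : Fin 4, ∃ f : ℂ → ℂ, DifferentiableOn ℂ f D ∧
          (∀ z ∈ D, f ((starRingEnd ℂ) z) = (starRingEnd ℂ) (f z)) ∧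
          ∀ z : D, F m z = f (z : ℂ)) ∧
        ∀ z : D, ∀ J : Quaternion ℝ, J ^ 2 = -1 →
          (∑ m : Fin 4, sliceValue J (F m z) * quatBasis m) ≠ 0} :=
  slice_regular_nonvanishing_pathConnected_general <| hbasic.imp
    (fun ⟨_, hD, _, hDs, hx, hconj, _⟩ => ⟨hD, hDs, hx, hconj⟩)
    fun ⟨U, _, hU, _, hUs, hpos, _, h⟩ => ⟨U, hU, hUs, hpos, h⟩
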